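/- Let n ≥ 2, a ∈ ℝⁿ, and let x, y ∈ ℝⁿ \ {a} with x ≠ y. Then log(1 + |x−y|/min(|x−a|, |y−a|)) ≤ 2·log(1 + q(x,y)/min{q(x,a), q(y,a), 1/σ(x), 1/σ(y)}). (This is the inequality j_{G_a} ≤ 2·ĵ_{G_a} for the punctured space G_a = ℝⁿ \ {a}, whose boundary in the Möbius space S̄ⁿ = ℝⁿ ∪ {∞} is {a, ∞}.) -/

import Mathlib

/-!
Write `d = |x - y|`, `A = σ(a)`, and suppose `r = |x - a|` is the smaller of the two Euclidean
distances to `a`. With `Q` the chordal quotient, the claim is `d / r ≤ Q (2 + Q)`.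
Since `σ` is 1-Lipschitz, `σ(x) ≤ A + r` and `σ(y) ≤ A + r + d`, so comparing `q(x, y)` with the
distances `1 / σ(y)` and `q(x, a)` to the boundary gives
`Q ≥ d / (A + r)` and `Q ≥ d A / (r (A + r + d))`.
If `A² ≤ r (d + r)`, the first bound alone suffices. Otherwise the first bound yields
`2 + Q ≥ (A + r + d) / A`, and multiplying this by the second bound gives the claim.
-/

/-- `σ(x) = √(1 + |x|²)`. -/
noncomputable def sigmaFn {n : ℕ} (x : EuclideanSpace ℝ (Fin n)) : ℝ :=
  Real.sqrt (1 + ‖x‖ ^ 2)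

/-- The chordal (spherical) distance between two finite points of the Möbius space
`S̄ⁿ = ℝⁿ ∪ {∞}`: `q(x,y) = |x−y|/(σ(x)σ(y))`. -/
noncomputable def chordal {n : ℕ} (x y : EuclideanSpace ℝ (Fin n)) : ℝ :=
  ‖x - y‖ / (sigmaFn x * sigmaFn y)

lemma sigmaFn_pos {n : ℕ} (x : EuclideanSpace ℝ (Fin n)) : 0 < sigmaFn x := by
  unfold sigmaFn; positivity

lemma chordal_pos {n : ℕ} {x y : EuclideanSpace ℝ (Fin n)} (h : x ≠ y) : 0 < chordal x y :=
  div_pos (norm_pos_iff.2 (sub_ne_zero.2 h)) (mul_pos (sigmaFn_pos x) (sigmaFn_pos y))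

lemma sigmaFn_le_add {n : ℕ} (x a : EuclideanSpace ℝ (Fin n)) :
    sigmaFn x ≤ sigmaFn a + ‖x - a‖ := by
  have hA : sigmaFn a ^ 2 = 1 + ‖a‖ ^ 2 := Real.sq_sqrt (by positivity)
  have hA0 := sigmaFn_pos a
  have haA : ‖a‖ ≤ sigmaFn a := Real.le_sqrt_of_sq_le (by linarith)
  have hxa : ‖x‖ ≤ ‖a‖ + ‖x - a‖ := by simpa using norm_add_le a (x - a)
  have hr := norm_nonneg (x - a)
  have hsq : ‖x‖ ^ 2 ≤ (‖a‖ + ‖x - a‖) ^ 2 := pow_le_pow_left₀ (norm_nonneg x) hxa 2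
  refine Real.sqrt_le_iff.2 ⟨by positivity, ?_⟩
  nlinarith [mul_le_mul_of_nonneg_right haA hr]

/-- The real-variable core: `Q` plays the chordal quotient, `A` the value `σ(a)`. -/
lemma quotient_le_of_bounds {d r A Q : ℝ} (hd : 0 < d) (hr : 0 < r) (hA : 0 < A)
    (h1 : d / (A + r) ≤ Q) (h2 : d * A / (r * (A + r + d)) ≤ Q) :
    d / r ≤ Q * (2 + Q) := by
  have hQ : 0 < Q := lt_of_lt_of_le (by positivity) h1
  rcases le_total (A ^ 2) (r * (d + r)) with h | h
  · calc d / r ≤ d / (A + r) * (2 + d / (A + r)) := by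
          have e : d / (A + r) * (2 + d / (A + r)) = d * (2 * (A + r) + d) / (A + r) ^ 2 := by
            field_simp
          rw [e, div_le_div_iff₀ hr (by positivity), mul_assoc]
          exact mul_le_mul_of_nonneg_left (by nlinarith) hd.le
      _ ≤ Q * (2 + Q) := by gcongr
  · have h3 : (A + r + d) / A ≤ 2 + Q := by
      have : (A + r + d) / A ≤ 2 + d / (A + r) := by
        have e : 2 + d / (A + r) = (2 * (A + r) + d) / (A + r) := by field_simp
        rw [e, div_le_div_iff₀ hA (by positivity)]
        nlinarith
      linarith
    calc d / r = d * A / (r * (A + r + d)) * ((A + r + d) / A) := by field_simp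
      _ ≤ Q * (2 + Q) := by gcongr

/-- The estimate with `|x - a|` in place of the minimum of the Euclidean distances; `m` stands for
the chordal distance to the boundary, of which only two upper bounds are needed. -/
lemma one_add_div_le_sq {n : ℕ} {a x y : EuclideanSpace ℝ (Fin n)} (hx : x ≠ a) (hxy : x ≠ y)
    {m : ℝ} (hm : 0 < m) (hma : m ≤ chordal x a) (hmy : m ≤ 1 / sigmaFn y) :
    1 + ‖x - y‖ / ‖x - a‖ ≤ (1 + chordal x y / m) ^ 2 := by
  have hd : 0 < ‖x - y‖ := norm_pos_iff.2 (sub_ne_zero.2 hxy)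
  have hr : 0 < ‖x - a‖ := norm_pos_iff.2 (sub_ne_zero.2 hx)
  have hA := sigmaFn_pos a
  have hX := sigmaFn_pos x
  have hY := sigmaFn_pos y
  have hq := chordal_pos hxy
  have hX' := sigmaFn_le_add x a
  have hY' : sigmaFn y ≤ sigmaFn a + ‖x - a‖ + ‖x - y‖ := by
    have := sigmaFn_le_add y x
    rw [norm_sub_rev] at this
    linarith
  have h1 : ‖x - y‖ / (sigmaFn a + ‖x - a‖) ≤ chordal x y / m :=
    calc ‖x - y‖ / (sigmaFn a + ‖x - a‖) ≤ ‖x - y‖ / sigmaFn x := by gcongr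
      _ = chordal x y / (1 / sigmaFn y) := by unfold chordal; field_simp
      _ ≤ chordal x y / m := by gcongr
  have h2 : ‖x - y‖ * sigmaFn a / (‖x - a‖ * (sigmaFn a + ‖x - a‖ + ‖x - y‖)) ≤
      chordal x y / m :=
    calc _ ≤ ‖x - y‖ * sigmaFn a / (‖x - a‖ * sigmaFn y) := by gcongr
      _ = chordal x y / chordal x a := by unfold chordal; field_simp
      _ ≤ chordal x y / m := by gcongr
  have := quotient_le_of_bounds hd hr hA h1 h2
  nlinarith

/-- For the punctured space `G_a = ℝⁿ \ {a}` (whose boundary in `S̄ⁿ` is `{a, ∞}`),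
the Euclidean distance-ratio metric is bounded by twice the chordal distance-ratio
metric: `j_{G_a}(x,y) ≤ 2·ĵ_{G_a}(x,y)`. -/
theorem j_le_two_jhat_punctured {n : ℕ} (hn : 2 ≤ n)
    (a x y : EuclideanSpace ℝ (Fin n)) (hx : x ≠ a) (hy : y ≠ a) (hxy : x ≠ y) :
    Real.log (1 + ‖x - y‖ / min ‖x - a‖ ‖y - a‖) ≤
      2 * Real.log (1 + chordal x y /
        min (min (chordal x a) (chordal y a))
            (min (1 / sigmaFn x) (1 / sigmaFn y))) := by
  have hq := chordal_pos hxy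
  have hxa := chordal_pos hx
  have hya := chordal_pos hy
  have hX := sigmaFn_pos x
  have hY := sigmaFn_pos y
  set m := min (min (chordal x a) (chordal y a)) (min (1 / sigmaFn x) (1 / sigmaFn y)) with hm_def
  have hm : 0 < m := lt_min (lt_min hxa hya) (lt_min (by positivity) (by positivity))
  have key : 1 + ‖x - y‖ / min ‖x - a‖ ‖y - a‖ ≤ (1 + chordal x y / m) ^ 2 := by
    rcases le_total ‖x - a‖ ‖y - a‖ with h | h
    · rw [min_eq_left h]
      exact one_add_div_le_sq hx hxy hm (by simp [hm_def]) (by simp [hm_def])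
    · have hsymm : chordal x y = chordal y x := by
        unfold chordal
        rw [norm_sub_rev, mul_comm]
      rw [min_eq_right h, norm_sub_rev x y, hsymm]
      exact one_add_div_le_sq hy hxy.symm hm (by simp [hm_def]) (by simp [hm_def])
  calc _ ≤ Real.log ((1 + chordal x y / m) ^ 2) := Real.log_le_log (by positivity) key
    _ = _ := by rw [Real.log_pow]; norm_num
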